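/- Let d ≥ 2, μ > −1, n ≥ 0, and let f be a polynomial in d variables of total degree at most n. Then Σ_{i=1}^d ‖√(1−‖x‖²) ∂_i f‖²_{μ,2} + Σ_{1≤i<j≤d} ‖D_{i,j} f‖²_{μ,2} ≤ n(n+2μ+d) ‖f‖²_{μ,2}, and equality holds if and only if f ∈ 𝒱_n(W_μ, B^d). -/

import Mathlib

/-!
Write `L p = ∫_{B^d} p W_μ` for a polynomial `p`, and `θ = ∑ xᵢ ∂ᵢ`, `r² = ∑ xᵢ²`. The left-hand
side of the inequality is the energy `L((1 - r²)|∇f|²) + ∑_{i<j} L((D_{ij} f)²)`.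

Two integration-by-parts rules hold: `L((1 - r²) ∂ᵢ p) = 2(μ+1) L(xᵢ p)` (`moment_radial`, by
Fubini and the fundamental theorem of calculus on chords) and `L(D_{ij} p) = 0`
(`moment_angular`). The second follows from the first: antisymmetrizing shows
`L((1 - r²) D_{ij} p) = 0`, so `L(D_{ij} p) = L(r^{2k} D_{ij} p)` for every `k`, which tends to
zero. Together with the identity `r²Δ - ∑_{i<j} D_{ij}² = θ² + (d-2)θ` (`sum_Dpoly_sq`) they show
that the energy form is represented by the operator `A = -Δ + θ² + (2μ+d)θ`
(`IsBallFunctional.energy`); in particular `A` is symmetric.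

By Euler's identity `A - n(n+2μ+d) = -Δ + (θ + n + 2μ + d)(θ - n)` lowers the degree of polynomials
of degree at most `n` (`totalDegree_ballOp_sub_le`). Hence on `𝒱_n` the energy is exactly
`n(n+2μ+d) L(f²)`. A general `f` of degree at most `n` is `p + q` with `p ∈ 𝒱_n` and `q` of degree
less than `n`; the energy and the norm both split along this decomposition, and induction on `n`
applies to `q`. As `d ≥ 2` and `μ > -1`, the numbers `n(n+2μ+d)` strictly increase, so equality
forces `L(q²) = 0`, that is `q = 0` (`IsBallFunctional.bernstein`).
-/

open MeasureTheory Real MvPolynomial Finset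
open scoped ENNReal

noncomputable section

/-- The Euclidean norm of `x ∈ ℝ^d`. -/
def eunorm {d : ℕ} (x : Fin d → ℝ) : ℝ := Real.sqrt (∑ i, (x i) ^ 2)

/-- The closed unit ball `B^d = {x : ‖x‖ ≤ 1}` in `ℝ^d` (Euclidean norm). -/
def Bd (d : ℕ) : Set (Fin d → ℝ) := {x | eunorm x ≤ 1}

/-- The metric `d_B(x,y) = arccos(⟨x,y⟩ + √(1-‖x‖²)√(1-‖y‖²))` on the unit ball. -/
def distB {d : ℕ} (x y : Fin d → ℝ) : ℝ :=
  Real.arccos ((∑ i, x i * y i) +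
    Real.sqrt (1 - eunorm x ^ 2) * Real.sqrt (1 - eunorm y ^ 2))

/-- The metric ball `{y ∈ B^d : d_B(x,y) < r}`. -/
def ballB {d : ℕ} (x : Fin d → ℝ) (r : ℝ) : Set (Fin d → ℝ) :=
  {y | y ∈ Bd d ∧ distB x y < r}

/-- `W` is a doubling weight on the unit ball `B^d` with respect to the metric `d_B`. -/
def IsDoublingBall (d : ℕ) (W : (Fin d → ℝ) → ℝ) : Prop :=
  ∃ L > (0 : ℝ), ∀ x ∈ Bd d, ∀ r : ℝ, 0 < r →
    ∫ y in ballB x (2 * r), W y ≤ L * ∫ y in ballB x r, W y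

/-- The standard simplex `Δ^d = {x : x_i ≥ 0, x_1 + ⋯ + x_d ≤ 1}`. -/
def Td (d : ℕ) : Set (Fin d → ℝ) := {x | (∀ i, 0 ≤ x i) ∧ ∑ i, x i ≤ 1}

/-- The metric `d_Δ(x,y) = arccos(Σ √(x_i y_i) + √((1-|x|)(1-|y|)))` on the simplex. -/
def distT {d : ℕ} (x y : Fin d → ℝ) : ℝ :=
  Real.arccos ((∑ i, Real.sqrt (x i * y i)) +
    Real.sqrt ((1 - ∑ i, x i) * (1 - ∑ i, y i)))

/-- The metric ball `{y ∈ Δ^d : d_Δ(x,y) < r}`. -/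
def ballT {d : ℕ} (x : Fin d → ℝ) (r : ℝ) : Set (Fin d → ℝ) :=
  {y | y ∈ Td d ∧ distT x y < r}

/-- `W` is a doubling weight on the simplex `Δ^d` with respect to the metric `d_Δ`. -/
def IsDoublingSimplex (d : ℕ) (W : (Fin d → ℝ) → ℝ) : Prop :=
  ∃ L > (0 : ℝ), ∀ x ∈ Td d, ∀ r : ℝ, 0 < r →
    ∫ y in ballT x (2 * r), W y ≤ L * ∫ y in ballT x r, W y

/-- Weighted `L^p` norm on the unit ball: for `p < ∞` it is
`(∫_{B^d} |f|^p W)^{1/p}`, and for `p = ∞` the sup norm on `B^d`. -/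
def lpNormB (d : ℕ) (W : (Fin d → ℝ) → ℝ) (p : ℝ≥0∞) (f : (Fin d → ℝ) → ℝ) : ℝ :=
  if p = ⊤ then ⨆ x : Bd d, |f x.1|
  else (∫ x in Bd d, |f x| ^ p.toReal * W x) ^ (1 / p.toReal)

/-- Weighted `L^p` norm on the simplex: for `p < ∞` it is
`(∫_{Δ^d} |f|^p W)^{1/p}`, and for `p = ∞` the sup norm on `Δ^d`. -/
def lpNormT (d : ℕ) (W : (Fin d → ℝ) → ℝ) (p : ℝ≥0∞) (f : (Fin d → ℝ) → ℝ) : ℝ :=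
  if p = ⊤ then ⨆ x : Td d, |f x.1|
  else (∫ x in Td d, |f x| ^ p.toReal * W x) ^ (1 / p.toReal)

/-- Evaluation of a real polynomial in `d` variables at a point of `ℝ^d`. -/
def evalP {d : ℕ} (f : MvPolynomial (Fin d) ℝ) (x : Fin d → ℝ) : ℝ :=
  MvPolynomial.eval x f

/-- The angular derivative `D_{i,j} = x_i ∂_j − x_j ∂_i` acting on polynomials. -/
def Dpoly {d : ℕ} (i j : Fin d) (f : MvPolynomial (Fin d) ℝ) : MvPolynomial (Fin d) ℝ :=
  X i * pderiv j f - X j * pderiv i f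

/-- The classical weight `W_μ(x) = (1−‖x‖²)^μ` on the unit ball. -/
def Wmu (d : ℕ) (μ : ℝ) (x : Fin d → ℝ) : ℝ := (1 - eunorm x ^ 2) ^ μ

/-- The squared weighted `L²(W_μ, B^d)` norm `‖f‖²_{μ,2} = ∫_{B^d} f² W_μ`. -/
def sqNormMu (d : ℕ) (μ : ℝ) (f : (Fin d → ℝ) → ℝ) : ℝ :=
  ∫ x in Bd d, (f x) ^ 2 * Wmu d μ x

/-- The weighted `L²(W_μ, B^d)` norm `‖f‖_{μ,2}`. -/
def normMu (d : ℕ) (μ : ℝ) (f : (Fin d → ℝ) → ℝ) : ℝ :=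
  Real.sqrt (sqNormMu d μ f)

/-- `f ∈ 𝒱_n(W_μ, B^d)`: a polynomial of total degree at most `n`, orthogonal in
`L²(W_μ, B^d)` to every polynomial of total degree less than `n`. -/
def memV (d : ℕ) (μ : ℝ) (n : ℕ) (f : MvPolynomial (Fin d) ℝ) : Prop :=
  f.totalDegree ≤ n ∧ ∀ g : MvPolynomial (Fin d) ℝ, g.totalDegree < n →
    ∫ x in Bd d, evalP f x * evalP g x * Wmu d μ x = 0

/-- The spectral operator `𝒟_μ` acting on polynomials. -/
def DmuP (d : ℕ) (μ : ℝ) (f : MvPolynomial (Fin d) ℝ) : MvPolynomial (Fin d) ℝ :=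
  (∑ i, (1 - X i ^ 2) * pderiv i (pderiv i f))
    - 2 * (∑ i, ∑ j ∈ Finset.Ioi i, X i * X j * pderiv i (pderiv j f))
    - C ((d : ℝ) + 2 * μ + 1) * ∑ i, X i * pderiv i f

/-- The partial derivative `∂_i` of a function on `ℝ^d`. -/
def pd {d : ℕ} (i : Fin d) (f : (Fin d → ℝ) → ℝ) (x : Fin d → ℝ) : ℝ :=
  fderiv ℝ f x (Pi.single i 1)

/-- `⟨x,∇⟩f(x) = Σ_i x_i ∂_i f(x)`. -/
def xgrad {d : ℕ} (f : (Fin d → ℝ) → ℝ) (x : Fin d → ℝ) : ℝ :=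
  ∑ i, x i * pd i f x

/-- The angular derivative `D_{i,j} = x_i ∂_j − x_j ∂_i` acting on functions. -/
def DijF {d : ℕ} (i j : Fin d) (f : (Fin d → ℝ) → ℝ) (x : Fin d → ℝ) : ℝ :=
  x i * pd j f x - x j * pd i f x

/-- The spectral operator `𝒟_μ` acting on functions. -/
def DmuF (d : ℕ) (μ : ℝ) (f : (Fin d → ℝ) → ℝ) (x : Fin d → ℝ) : ℝ :=
  (∑ i, (1 - x i ^ 2) * pd i (pd i f) x)
    - 2 * (∑ i, ∑ j ∈ Finset.Ioi i, x i * x j * pd i (pd j f) x)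
    - ((d : ℝ) + 2 * μ + 1) * ∑ i, x i * pd i f x


/-! ### The differential operator on polynomials -/

/-- The Euler operator `θ = ∑ xᵢ ∂ᵢ`. -/
def eulerOp {d : ℕ} (f : MvPolynomial (Fin d) ℝ) : MvPolynomial (Fin d) ℝ :=
  ∑ i, X i * pderiv i f

/-- The operator `-Δ + θ² + c θ`, which for `c = 2μ + d` is `-𝒟_μ`. -/
def ballOp {d : ℕ} (c : ℝ) (f : MvPolynomial (Fin d) ℝ) : MvPolynomial (Fin d) ℝ :=
  -(∑ i, pderiv i (pderiv i f)) + eulerOp (eulerOp f) + C c * eulerOp f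

lemma coeff_eulerOp {d : ℕ} (f : MvPolynomial (Fin d) ℝ) (m : Fin d →₀ ℕ) :
    coeff m (eulerOp f) = (m.degree : ℝ) * coeff m f := by
  induction f using MvPolynomial.induction_on' with
  | monomial s a =>
    have hs : eulerOp (monomial s a) = s.degree • monomial s a := by
      simp only [eulerOp, X_mul_pderiv_monomial]
      rw [← Finset.sum_smul, Finsupp.degree_eq_sum]
    rw [hs, coeff_smul, coeff_monomial]
    by_cases h : s = m
    · subst h
      simp
    · simp [h]
  | add p q hp hq =>
    have : eulerOp (p + q) = eulerOp p + eulerOp q := by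
      simp [eulerOp, mul_add, Finset.sum_add_distrib]
    rw [this, coeff_add, hp, hq, coeff_add]; ring

lemma totalDegree_le_iff_coeff {d : ℕ} (f : MvPolynomial (Fin d) ℝ) (n : ℕ) :
    f.totalDegree ≤ n ↔ ∀ m : Fin d →₀ ℕ, n < m.degree → coeff m f = 0 := by
  constructor
  · intro h m hm
    apply coeff_eq_zero_of_totalDegree_lt
    have := lt_of_le_of_lt h hm
    exact this
  · intro h
    rw [totalDegree_eq, Finset.sup_le_iff]
    intro m hm
    by_contra hc
    push Not at hc
    rw [mem_support_iff] at hm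
    apply hm (h m _)
    rw [Finsupp.card_toMultiset] at hc
    exact hc

lemma totalDegree_eulerOp_le {d : ℕ} {f : MvPolynomial (Fin d) ℝ} {n : ℕ}
    (hf : f.totalDegree ≤ n) : (eulerOp f).totalDegree ≤ n := by
  rw [totalDegree_le_iff_coeff] at *
  intro m hm
  rw [coeff_eulerOp, hf m hm, mul_zero]

/-- By Euler's identity `θ - (n+1)` kills the homogeneous part of degree `n + 1`. -/
lemma totalDegree_eulerOp_sub_le {d : ℕ} {f : MvPolynomial (Fin d) ℝ} {n : ℕ}
    (hf : f.totalDegree ≤ n + 1) :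
    (eulerOp f - C ((n : ℝ) + 1) * f).totalDegree ≤ n := by
  rw [totalDegree_le_iff_coeff] at *
  intro m hm
  rw [coeff_sub, coeff_eulerOp, coeff_C_mul]
  rcases Nat.lt_or_ge (n + 1) m.degree with h | h
  · rw [hf m h]; simp
  · have : m.degree = n + 1 := by omega
    rw [this]; push_cast; ring

lemma totalDegree_pderiv_le {d : ℕ} (i : Fin d) {f : MvPolynomial (Fin d) ℝ} {n : ℕ}
    (hf : f.totalDegree ≤ n + 1) : (pderiv i f).totalDegree ≤ n := by
  rw [totalDegree_le_iff_coeff] at *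
  intro m hm
  rw [coeff_pderiv, hf, zero_mul]
  simpa using hm

lemma totalDegree_laplacian_le {d : ℕ} {f : MvPolynomial (Fin d) ℝ} {n : ℕ}
    (hf : f.totalDegree ≤ n + 1) : (∑ i, pderiv i (pderiv i f)).totalDegree ≤ n := by
  apply totalDegree_finsetSum_le
  intro i _
  apply totalDegree_pderiv_le
  exact (totalDegree_pderiv_le i hf).trans (Nat.le_succ n)

lemma eulerOp_sub {d : ℕ} (p q : MvPolynomial (Fin d) ℝ) :
    eulerOp (p - q) = eulerOp p - eulerOp q := by
  simp [eulerOp, mul_sub, Finset.sum_sub_distrib]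

lemma eulerOp_add {d : ℕ} (p q : MvPolynomial (Fin d) ℝ) :
    eulerOp (p + q) = eulerOp p + eulerOp q := by
  simp [eulerOp, mul_add, Finset.sum_add_distrib]

lemma eulerOp_C_mul {d : ℕ} (a : ℝ) (p : MvPolynomial (Fin d) ℝ) :
    eulerOp (C a * p) = C a * eulerOp p := by
  simp only [eulerOp, pderiv_C_mul, Finset.mul_sum]
  refine Finset.sum_congr rfl fun i _ => ?_
  ring

lemma ballOp_add {d : ℕ} (c : ℝ) (p q : MvPolynomial (Fin d) ℝ) :
    ballOp c (p + q) = ballOp c p + ballOp c q := by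
  simp only [ballOp, eulerOp_add, map_add, Finset.sum_add_distrib]; ring

lemma totalDegree_ballOp_le {d : ℕ} (c : ℝ) {f : MvPolynomial (Fin d) ℝ} {n : ℕ}
    (hf : f.totalDegree ≤ n) : (ballOp c f).totalDegree ≤ n := by
  have h1 := totalDegree_laplacian_le (hf.trans (Nat.le_succ n))
  have h2 := totalDegree_eulerOp_le hf
  have h3 := totalDegree_eulerOp_le h2
  rw [totalDegree_le_iff_coeff] at *
  intro m hm
  rw [ballOp, coeff_add, coeff_add, coeff_neg, h1 m hm, h3 m hm, coeff_C_mul, h2 m hm]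
  simp

/-- `ballOp c` acts on polynomials of degree at most `n + 1` as the scalar
`(n + 1)(n + 1 + c)`, modulo lower degree: the difference is `-Δ + (θ + n + 1 + c)(θ - (n + 1))`. -/
lemma totalDegree_ballOp_sub_le {d : ℕ} (c : ℝ) {f : MvPolynomial (Fin d) ℝ} {n : ℕ}
    (hf : f.totalDegree ≤ n + 1) :
    (ballOp c f - C (((n : ℝ) + 1) * ((n : ℝ) + 1 + c)) * f).totalDegree ≤ n := by
  have h1 := totalDegree_laplacian_le hf
  have h2 := totalDegree_eulerOp_sub_le hf
  have h3 := totalDegree_eulerOp_le h2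
  have key : ballOp c f - C (((n : ℝ) + 1) * ((n : ℝ) + 1 + c)) * f
      = -(∑ i, pderiv i (pderiv i f)) + eulerOp (eulerOp f - C ((n : ℝ) + 1) * f)
        + C ((n : ℝ) + 1 + c) * (eulerOp f - C ((n : ℝ) + 1) * f) := by
    rw [ballOp, eulerOp_sub, eulerOp_C_mul]
    simp only [map_add, map_mul]
    ring
  rw [key]
  rw [totalDegree_le_iff_coeff] at *
  intro m hm
  rw [coeff_add, coeff_add, coeff_neg, h1 m hm, h3 m hm, coeff_C_mul, h2 m hm]
  simp

/-! ### The energy identity -/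

/-- The squared radius as a polynomial. -/
def rsqP (d : ℕ) : MvPolynomial (Fin d) ℝ := ∑ i, X i ^ 2

lemma two_mul_sum_Ioi {d : ℕ} {M : Type*} [CommRing M] (F : Fin d → Fin d → M)
    (hs : ∀ i j, F i j = F j i) (h0 : ∀ i, F i i = 0) :
    2 * ∑ i, ∑ j ∈ Finset.Ioi i, F i j = ∑ i, ∑ j, F i j := by
  have h1 : ∑ i, ∑ j ∈ Finset.Ioi i, F i j = ∑ i, ∑ j ∈ Finset.Iio i, F i j := by
    rw [Finset.sum_comm' (t' := Finset.univ) (s' := fun j => Finset.Iio j) (by simp)]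
    exact Finset.sum_congr rfl fun i _ => Finset.sum_congr rfl fun j _ => hs _ _
  rw [two_mul]
  nth_rewrite 1 [h1]
  rw [← Finset.sum_add_distrib]
  refine Finset.sum_congr rfl fun i _ => ?_
  have : (Finset.univ : Finset (Fin d)) = (Finset.Iio i ∪ Finset.Ioi i) ∪ {i} := by
    ext j; simp; omega
  rw [this, Finset.sum_union, Finset.sum_union, Finset.sum_singleton, h0, add_zero]
  · rw [Finset.disjoint_left]; intro j; simp only [Finset.mem_Iio, Finset.mem_Ioi]; omega
  · rw [Finset.disjoint_left]; intro j
    simp only [Finset.mem_union, Finset.mem_Iio, Finset.mem_Ioi, Finset.mem_singleton]; omega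

lemma pderiv_pderiv_comm {d : ℕ} (i j : Fin d) (f : MvPolynomial (Fin d) ℝ) :
    pderiv i (pderiv j f) = pderiv j (pderiv i f) := by
  by_cases hij : i = j
  · rw [hij]
  · ext m
    simp only [coeff_pderiv]
    have hji : j ≠ i := fun h => hij h.symm
    simp [hij, hji, add_right_comm]
    ring

lemma sum_Dpoly_sq {d : ℕ} (f : MvPolynomial (Fin d) ℝ) :
    ∑ i, ∑ j ∈ Finset.Ioi i, Dpoly i j (Dpoly i j f)
      = rsqP d * (∑ i, pderiv i (pderiv i f)) - eulerOp (eulerOp f)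
        - C ((d : ℝ) - 2) * eulerOp f := by
  have h := two_mul_sum_Ioi (fun i j => Dpoly i j (Dpoly i j f))
    (fun i j => by simp only [Dpoly, map_sub]; ring) (fun i => by simp [Dpoly])
  have hE : eulerOp (eulerOp f)
      = ∑ i, ∑ j, X i * X j * pderiv i (pderiv j f) + eulerOp f := by
    conv_lhs => unfold eulerOp
    conv_rhs => unfold eulerOp
    rw [← Finset.sum_add_distrib]
    refine Finset.sum_congr rfl fun i _ => ?_
    rw [map_sum, Finset.mul_sum]
    simp only [Derivation.leibniz, pderiv_X, smul_eq_mul, mul_add, Finset.sum_add_distrib]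
    congr 1
    · exact Finset.sum_congr rfl fun j _ => by ring
    · simp [Pi.single_apply]
  have hD : ∀ i j, Dpoly i j (Dpoly i j f) = X i ^ 2 * pderiv j (pderiv j f)
      + X j ^ 2 * pderiv i (pderiv i f) - X i * pderiv i f - X j * pderiv j f
      - 2 * (X i * X j * pderiv i (pderiv j f))
      + (if i = j then 2 * (X i * pderiv i f) else 0) := by
    intro i j
    by_cases hij : i = j
    · subst hij; simp [Dpoly]; ring
    · have hji : j ≠ i := fun h => hij h.symm
      simp only [Dpoly, map_sub, Derivation.leibniz, pderiv_X, smul_eq_mul, pderiv_pderiv_comm j i]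
      simp [hij, hji]
      ring
  have h2 : ∑ i, ∑ j, Dpoly i j (Dpoly i j f)
      = 2 * (rsqP d * (∑ i, pderiv i (pderiv i f)) - eulerOp (eulerOp f)
        - C ((d : ℝ) - 2) * eulerOp f) := by
    rw [hE]
    simp only [hD, Finset.sum_add_distrib, Finset.sum_sub_distrib, Finset.sum_const,
      Finset.card_univ, Fintype.card_fin, nsmul_eq_mul, Finset.sum_ite_eq, Finset.mem_univ,
      if_true]
    simp only [← Finset.mul_sum, ← Finset.sum_mul, rsqP, map_sub, map_natCast, map_ofNat, eulerOp]
    ring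
  have h3 : (2 : MvPolynomial (Fin d) ℝ) ≠ 0 := two_ne_zero
  exact mul_left_cancel₀ h3 (h.trans h2)

lemma Dpoly_mul {d : ℕ} (i j : Fin d) (p q : MvPolynomial (Fin d) ℝ) :
    Dpoly i j (p * q) = p * Dpoly i j q + q * Dpoly i j p := by
  simp only [Dpoly, pderiv_mul]; ring

/-- The properties of the moment functional `L p = ∫ p W_μ` on the ball that enter the proof:
the two integration-by-parts rules and positive definiteness. -/
structure IsBallFunctional (d : ℕ) (μ : ℝ) (L : MvPolynomial (Fin d) ℝ →ₗ[ℝ] ℝ) : Prop where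
  radial : ∀ i p, L ((1 - rsqP d) * pderiv i p) = 2 * (μ + 1) * L (X i * p)
  angular : ∀ i j p, L (Dpoly i j p) = 0
  nonneg : ∀ p, 0 ≤ L (p * p)
  definite : ∀ p, L (p * p) = 0 → p = 0

section Functional

variable {d : ℕ} {μ : ℝ} {L : MvPolynomial (Fin d) ℝ →ₗ[ℝ] ℝ}

lemma map_C_mul_functional (L : MvPolynomial (Fin d) ℝ →ₗ[ℝ] ℝ) (a : ℝ)
    (p : MvPolynomial (Fin d) ℝ) : L (C a * p) = a * L p := by
  rw [← MvPolynomial.smul_eq_C_mul, map_smul, smul_eq_mul]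

/-- Green's identity: the energy form is represented by `ballOp (2μ + d)`. -/
lemma IsBallFunctional.energy (hL : IsBallFunctional d μ L) (f g : MvPolynomial (Fin d) ℝ) :
    ∑ i, L ((1 - rsqP d) * (pderiv i f * pderiv i g))
      + ∑ i, ∑ j ∈ Finset.Ioi i, L (Dpoly i j f * Dpoly i j g)
      = L (g * ballOp (2 * μ + d) f) := by
  have h1 : ∀ i, L ((1 - rsqP d) * (pderiv i f * pderiv i g))
      = L (C (2 * (μ + 1)) * (g * (X i * pderiv i f))
          - g * (1 - rsqP d) * pderiv i (pderiv i f)) := by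
    intro i
    have h := hL.radial i (pderiv i f * g)
    have e : (1 - rsqP d) * pderiv i (pderiv i f * g)
        = (1 - rsqP d) * (pderiv i f * pderiv i g)
          + g * (1 - rsqP d) * pderiv i (pderiv i f) := by
      rw [pderiv_mul]; ring
    rw [e, map_add] at h
    rw [map_sub, map_C_mul_functional, ← mul_left_comm (X i), mul_comm g (pderiv i f), ← h]
    ring
  have h2 : ∀ i j, L (Dpoly i j f * Dpoly i j g) = L (-(g * Dpoly i j (Dpoly i j f))) := by
    intro i j
    have h := hL.angular i j (Dpoly i j f * g)
    rw [Dpoly_mul, map_add] at h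
    rw [map_neg]
    linarith
  simp only [h1, h2, ← map_sum, ← map_add]
  congr 1
  rw [Finset.sum_sub_distrib]
  simp only [Finset.sum_neg_distrib, ← Finset.mul_sum]
  rw [sum_Dpoly_sq, ballOp]
  rw [show ∑ i, X i * pderiv i f = eulerOp f from rfl]
  simp only [map_add, map_mul, map_sub, map_ofNat, map_one, map_natCast]
  ring

lemma IsBallFunctional.symm (hL : IsBallFunctional d μ L) (f g : MvPolynomial (Fin d) ℝ) :
    L (g * ballOp (2 * μ + d) f) = L (f * ballOp (2 * μ + d) g) := by
  rw [← hL.energy, ← hL.energy]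
  simp only [mul_comm (pderiv _ f), mul_comm (Dpoly _ _ f)]

/-- Orthogonal projection onto the polynomials of degree at most `n`. -/
lemma IsBallFunctional.exists_proj (hL : IsBallFunctional d μ L) (n : ℕ)
    (f : MvPolynomial (Fin d) ℝ) :
    ∃ q : MvPolynomial (Fin d) ℝ, q.totalDegree ≤ n ∧
      ∀ g : MvPolynomial (Fin d) ℝ, g.totalDegree ≤ n → L ((f - q) * g) = 0 := by
  let S := restrictTotalDegree (Fin d) ℝ n
  let B : MvPolynomial (Fin d) ℝ →ₗ[ℝ] Module.Dual ℝ S :=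
    LinearMap.mk₂ ℝ (fun p (g : S) => L (p * g.1))
      (fun p q g => by rw [add_mul, map_add]) (fun a p g => by simp)
      (fun p g h => by simp [mul_add]) (fun a p g => by simp)
  have hB : ∀ p (g : S), B p g = L (p * g.1) := fun _ _ => rfl
  have hinj : Function.Injective (B.comp S.subtype) := by
    rw [← LinearMap.ker_eq_bot, LinearMap.ker_eq_bot']
    intro q hq
    have h := LinearMap.congr_fun hq q
    exact Subtype.ext (hL.definite q.1 h)
  have hsurj := (LinearMap.injective_iff_surjective_of_finrank_eq_finrank
    (Subspace.dual_finrank_eq (K := ℝ) (V := S)).symm).1 hinj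
  obtain ⟨q, hq⟩ := hsurj (B f)
  refine ⟨q.1, (mem_restrictTotalDegree _ _ _).1 q.2, fun g hg => ?_⟩
  have h := LinearMap.congr_fun hq ⟨g, (mem_restrictTotalDegree _ _ _).2 hg⟩
  rw [LinearMap.comp_apply, hB, hB] at h
  rw [sub_mul, map_sub, ← h]
  exact sub_self _

/-- An element of `𝒱_{n+1}` behaves as an eigenvector of `ballOp (2μ + d)` with eigenvalue
`(n + 1)(n + 1 + 2μ + d)`, because the operator is that scalar up to lower degree. -/
lemma energy_of_orthogonal {n : ℕ} {p : MvPolynomial (Fin d) ℝ}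
    (hp : p.totalDegree ≤ n + 1)
    (ho : ∀ g : MvPolynomial (Fin d) ℝ, g.totalDegree ≤ n → L (p * g) = 0) (c : ℝ) :
    L (p * ballOp c p) = ((n : ℝ) + 1) * ((n : ℝ) + 1 + c) * L (p * p) := by
  have h := ho _ (totalDegree_ballOp_sub_le c hp)
  rw [mul_sub, map_sub, mul_left_comm, map_C_mul_functional] at h
  linarith

/-- The sharp inequality and its equality case for an abstract ball functional, by induction on
the degree: split `f` as `p + q` with `p ∈ 𝒱_{n+1}` and `q` of degree at most `n`. The energy
splits accordingly, and the eigenvalue bound strictly increases with the degree. -/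
theorem IsBallFunctional.bernstein (hL : IsBallFunctional d μ L) (hd : 2 ≤ d) (hμ : -1 < μ)
    (n : ℕ) : ∀ f : MvPolynomial (Fin d) ℝ, f.totalDegree ≤ n →
    L (f * ballOp (2 * μ + d) f) ≤ n * (n + 2 * μ + d) * L (f * f) ∧
    (L (f * ballOp (2 * μ + d) f) = n * (n + 2 * μ + d) * L (f * f) ↔
      ∀ g : MvPolynomial (Fin d) ℝ, g.totalDegree < n → L (f * g) = 0) := by
  have hd' : (2 : ℝ) ≤ d := by exact_mod_cast hd
  induction n with
  | zero =>
    intro f hf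
    have hC := totalDegree_eq_zero_iff_eq_C.1 (Nat.le_zero.1 hf)
    have h0 : ballOp (2 * μ + d) f = 0 := by
      rw [hC]; simp [ballOp, eulerOp]
    simp [h0]
  | succ n ih =>
    intro f hf
    obtain ⟨q, hq, ho⟩ := hL.exists_proj n f
    obtain ⟨p, rfl⟩ : ∃ p, f = p + q := ⟨f - q, by ring⟩
    simp only [add_sub_cancel_right] at ho
    have hp : p.totalDegree ≤ n + 1 := by
      have h := totalDegree_sub (p + q) q
      rw [add_sub_cancel_right] at h
      exact h.trans (max_le hf (hq.trans (Nat.le_succ n)))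
    have hpp := energy_of_orthogonal hp ho (2 * μ + d)
    have hpq : L (p * ballOp (2 * μ + d) q) = 0 := ho _ (totalDegree_ballOp_le _ hq)
    have hqp : L (q * ballOp (2 * μ + d) p) = 0 := by rw [hL.symm, hpq]
    have hsum : L ((p + q) * ballOp (2 * μ + d) (p + q))
        = ((n : ℝ) + 1) * ((n : ℝ) + 1 + (2 * μ + d)) * L (p * p)
          + L (q * ballOp (2 * μ + d) q) := by
      rw [ballOp_add, mul_add, add_mul, add_mul]
      simp only [map_add]
      rw [hpp, hpq, hqp]; ring
    have hsq : L ((p + q) * (p + q)) = L (p * p) + L (q * q) := by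
      have h1 := ho q hq
      have h2 : L (q * p) = 0 := by rw [mul_comm, h1]
      rw [mul_add, add_mul, add_mul]
      simp only [map_add]
      rw [h1, h2]; ring
    have hqq := (ih q hq).1
    have hq0 := hL.nonneg q
    have hgap : (0 : ℝ) < 2 * n + 1 + 2 * μ + d := by
      have : (0 : ℝ) ≤ n := n.cast_nonneg
      linarith
    have hgapq : 0 ≤ (2 * n + 1 + 2 * μ + d) * L (q * q) := mul_nonneg hgap.le hq0
    push_cast
    refine ⟨?_, ?_, ?_⟩
    · rw [hsum, hsq]; nlinarith
    · intro heq g hg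
      have hz : (2 * n + 1 + 2 * μ + d) * L (q * q) ≤ 0 := by
        rw [hsum, hsq] at heq; nlinarith
      have hqz : q = 0 := by
        apply hL.definite
        have := le_antisymm hz hgapq
        rcases mul_eq_zero.1 this with h | h
        · exact absurd h hgap.ne'
        · exact h
      rw [hqz, add_zero]
      exact ho g (Nat.lt_succ_iff.1 hg)
    · intro h
      rw [energy_of_orthogonal hf (fun g hg => h g (Nat.lt_succ_iff.2 hg))]
      ring

end Functional

/-! ### Integration against the weight -/

lemma eunorm_sq {d : ℕ} (x : Fin d → ℝ) : eunorm x ^ 2 = ∑ i, x i ^ 2 :=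
  Real.sq_sqrt (Finset.sum_nonneg fun _ _ => sq_nonneg _)

lemma eunorm_eq_norm {d : ℕ} (x : Fin d → ℝ) : eunorm x = ‖WithLp.toLp 2 x‖ := by
  simp [eunorm, EuclideanSpace.norm_eq]

lemma mem_Bd_iff {d : ℕ} {x : Fin d → ℝ} : x ∈ Bd d ↔ ∑ i, x i ^ 2 ≤ 1 := by
  rw [← eunorm_sq, sq_le_one_iff₀ (show 0 ≤ eunorm x from Real.sqrt_nonneg _)]
  rfl

lemma continuous_eunorm {d : ℕ} : Continuous (eunorm (d := d)) := by
  unfold eunorm; fun_prop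

lemma isClosed_Bd (d : ℕ) : IsClosed (Bd d) := isClosed_le continuous_eunorm continuous_const

lemma isCompact_Bd (d : ℕ) : IsCompact (Bd d) := by
  refine Metric.isCompact_of_isClosed_isBounded (isClosed_Bd d) ?_
  refine (Metric.isBounded_closedBall (x := (0 : Fin d → ℝ)) (r := 1)).subset fun x hx => ?_
  rw [mem_closedBall_zero_iff, pi_norm_le_iff_of_nonneg zero_le_one]
  intro i
  rw [Real.norm_eq_abs, ← sq_le_one_iff_abs_le_one]
  exact (Finset.single_le_sum (f := fun i => x i ^ 2) (fun _ _ => sq_nonneg _)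
    (Finset.mem_univ i)).trans (mem_Bd_iff.1 hx)

/-- Almost every point of the ball is interior. -/
lemma ae_eunorm_lt {d : ℕ} (hd : 2 ≤ d) :
    ∀ᵐ x ∂(volume.restrict (Bd d)), eunorm x < 1 := by
  have : Nonempty (Fin d) := ⟨⟨0, by omega⟩⟩
  have h0 : ∀ᵐ x : Fin d → ℝ, eunorm x ≠ 1 := by
    have h := Measure.addHaar_sphere (volume : Measure (EuclideanSpace ℝ (Fin d))) 0 1
    have h' : ∀ᵐ z : EuclideanSpace ℝ (Fin d), ‖z‖ ≠ 1 := by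
      rw [ae_iff]
      convert h using 2
      ext z; simp
    filter_upwards [(PiLp.volume_preserving_toLp (Fin d)).quasiMeasurePreserving.ae h'] with x hx
    rwa [eunorm_eq_norm]
  filter_upwards [ae_restrict_of_ae h0, ae_restrict_mem (isClosed_Bd d).measurableSet] with x h1 h2
  exact lt_of_le_of_ne h2 h1

/-- The weight is integrable: in polar coordinates this is the convergence of
`∫₀¹ (1 - r)^μ dr` for `μ > -1`. -/
lemma integrableOn_Wmu {d : ℕ} (hd : 2 ≤ d) {μ : ℝ} (hμ : -1 < μ) :
    IntegrableOn (Wmu d μ) (Bd d) := by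
  have : Nonempty (Fin d) := ⟨⟨0, by omega⟩⟩
  have h1 : IntegrableOn (fun y : ℝ => (1 - y) ^ μ) (Set.Ioo 0 1) := by
    have h := (intervalIntegral.intervalIntegrable_rpow' (a := 0) (b := 1) hμ).comp_sub_left 1
    rw [intervalIntegrable_iff, Set.uIoc_comm] at h
    simp only [sub_zero, sub_self] at h
    rw [Set.uIoc_of_le zero_le_one] at h
    exact h.mono_set Set.Ioo_subset_Ioc_self
  have h2 : IntegrableOn (fun y : ℝ =>
      y ^ (Module.finrank ℝ (EuclideanSpace ℝ (Fin d)) - 1) • (1 - y ^ 2) ^ μ) (Set.Ioo 0 1) := by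
    have hc : ContinuousOn (fun y : ℝ =>
        y ^ (Module.finrank ℝ (EuclideanSpace ℝ (Fin d)) - 1) * (1 + y) ^ μ) (Set.Icc 0 1) := by
      apply ContinuousOn.mul (by fun_prop)
      apply ContinuousOn.rpow_const (by fun_prop)
      intro y hy
      left
      have := hy.1
      positivity
    have h3 := IntegrableOn.continuousOn_mul_of_subset hc h1 isCompact_Icc
      measurableSet_Ioo Set.Ioo_subset_Icc_self
    refine h3.congr_fun (fun y hy => ?_) measurableSet_Ioo
    have e : (1 - y ^ 2) = (1 + y) * (1 - y) := by ring
    have ha : 0 ≤ 1 + y := by linarith [hy.1]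
    have hb : 0 ≤ 1 - y := by linarith [hy.2]
    simp only [smul_eq_mul]
    rw [e, Real.mul_rpow ha hb]
    ring
  have h3 := (integrableOn_fun_norm_addHaar
    (volume : Measure (EuclideanSpace ℝ (Fin d))) (f := fun y : ℝ => (1 - y ^ 2) ^ μ)
    (r := 1)).2 h2
  have h4 : IntegrableOn (Wmu d μ) {x | eunorm x < 1} := by
    have h5 := ((PiLp.volume_preserving_toLp (Fin d)).integrableOn_comp_preimage
      (MeasurableEquiv.toLp 2 (Fin d → ℝ)).measurableEmbedding).2 h3
    have e : WithLp.toLp 2 ⁻¹' Metric.ball (0 : EuclideanSpace ℝ (Fin d)) 1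
        = {x | eunorm x < 1} := by
      ext x; simp [eunorm_eq_norm]
    rw [e] at h5
    refine h5.congr_fun (fun x _ => ?_) (isOpen_lt continuous_eunorm continuous_const).measurableSet
    simp [Wmu, eunorm_eq_norm]
  refine h4.mono_set_ae ?_
  have := ae_eunorm_lt hd
  rw [ae_restrict_iff' (isClosed_Bd d).measurableSet] at this
  filter_upwards [this] with x hx hxB
  exact hx hxB

lemma continuous_evalP {d : ℕ} (p : MvPolynomial (Fin d) ℝ) : Continuous (evalP p) :=
  MvPolynomial.continuous_eval p

lemma integrableOn_evalP_mul {d : ℕ} (hd : 2 ≤ d) {μ : ℝ} (hμ : -1 < μ)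
    (p : MvPolynomial (Fin d) ℝ) :
    IntegrableOn (fun x => evalP p x * Wmu d μ x) (Bd d) :=
  (integrableOn_Wmu hd hμ).continuousOn_mul (continuous_evalP p).continuousOn (isCompact_Bd d)

/-- The moment functional `p ↦ ∫_{B^d} p W_μ`. -/
def moment {d : ℕ} (hd : 2 ≤ d) {μ : ℝ} (hμ : -1 < μ) : MvPolynomial (Fin d) ℝ →ₗ[ℝ] ℝ where
  toFun p := ∫ x in Bd d, evalP p x * Wmu d μ x
  map_add' p q := by
    rw [← integral_add (integrableOn_evalP_mul hd hμ p) (integrableOn_evalP_mul hd hμ q)]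
    simp [evalP, add_mul]
  map_smul' a p := by
    simp only [RingHom.id_apply, smul_eq_mul]
    rw [← integral_const_mul]
    simp [evalP, smul_eval, mul_assoc]

lemma moment_apply {d : ℕ} (hd : 2 ≤ d) {μ : ℝ} (hμ : -1 < μ) (p : MvPolynomial (Fin d) ℝ) :
    moment hd hμ p = ∫ x in Bd d, evalP p x * Wmu d μ x := rfl

/-! ### Integration by parts -/

/-- On a chord, the integrand is the derivative of `P (1 - s - t²)^{μ+1}`, which vanishes at
both endpoints. The chord is empty or a point when `s ≥ 1`. -/
lemma integral_chord {P P' : ℝ → ℝ} (hP : ∀ t, HasDerivAt P (P' t) t) {μ : ℝ} (hμ : -1 < μ)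
    (s : ℝ) :
    ∫ t, Set.indicator {t : ℝ | t ^ 2 + s ≤ 1} (fun t =>
      ((1 - (t ^ 2 + s)) * P' t - 2 * (μ + 1) * (t * P t)) * (1 - (t ^ 2 + s)) ^ μ) t = 0 := by
  have hm : MeasurableSet {t : ℝ | t ^ 2 + s ≤ 1} :=
    measurableSet_le (by fun_prop) measurable_const
  rw [integral_indicator hm]
  rcases le_or_gt 1 s with hs | hs
  · apply setIntegral_measure_zero
    refine measure_mono_null (t := {(0 : ℝ)}) (fun t ht => ?_) (by simp)
    have : t ^ 2 ≤ 0 := by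
      have h : t ^ 2 + s ≤ 1 := ht
      linarith
    exact pow_eq_zero_iff two_ne_zero |>.1 (le_antisymm this (sq_nonneg t))
  · set a := Real.sqrt (1 - s) with ha
    have ha0 : 0 ≤ a := Real.sqrt_nonneg _
    have ha2 : a ^ 2 = 1 - s := Real.sq_sqrt (by linarith)
    have hset : {t : ℝ | t ^ 2 + s ≤ 1} = Set.Icc (-a) a := by
      ext t
      rw [Set.mem_Icc, ← abs_le, ← sq_le_sq₀ (abs_nonneg t) ha0, sq_abs, ha2, Set.mem_ofPred_eq]
      constructor <;> intro h <;> linarith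
    rw [hset]
    by_cases hint : IntegrableOn (fun t =>
      ((1 - (t ^ 2 + s)) * P' t - 2 * (μ + 1) * (t * P t)) * (1 - (t ^ 2 + s)) ^ μ)
        (Set.Icc (-a) a)
    swap
    · exact integral_undef hint
    have hle : -a ≤ a := by linarith
    rw [integral_Icc_eq_integral_Ioc, ← intervalIntegral.integral_of_le hle]
    have hPc : Continuous P := continuous_iff_continuousAt.2 fun t => (hP t).continuousAt
    rw [intervalIntegral.integral_eq_sub_of_hasDerivAt_of_le hle
      (f := fun t => P t * (1 - (t ^ 2 + s)) ^ (μ + 1))]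
    · have e1 : 1 - (a ^ 2 + s) = 0 := by rw [ha2]; ring
      have e2 : 1 - ((-a) ^ 2 + s) = 0 := by rw [neg_sq, e1]
      rw [e1, e2, Real.zero_rpow (by linarith)]
      simp
    · apply Continuous.continuousOn
      exact hPc.mul (Continuous.rpow_const (by fun_prop) fun t => Or.inr (by linarith))
    · intro t ht
      have hpos : 0 < 1 - (t ^ 2 + s) := by
        have : t ^ 2 < a ^ 2 := by
          rw [sq_lt_sq, abs_of_nonneg ha0]; exact abs_lt.2 ht
        linarith
      have hin : HasDerivAt (fun t : ℝ => 1 - (t ^ 2 + s)) (-(2 * t)) t := by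
        have := (((hasDerivAt_pow 2 t).add_const s).const_sub 1)
        simpa using this
      have h := (hP t).mul (hin.rpow_const (p := μ + 1) (Or.inl hpos.ne'))
      rw [show μ + 1 - 1 = μ by ring, Real.rpow_add hpos, Real.rpow_one] at h
      refine HasDerivAt.congr_deriv h ?_
      ring
    · rw [intervalIntegrable_iff_integrableOn_Icc_of_le hle]
      exact hint

lemma hasDerivAt_eval_insertNth {m : ℕ} (i : Fin (m + 1)) (y : Fin m → ℝ)
    (p : MvPolynomial (Fin (m + 1)) ℝ) (t : ℝ) :
    HasDerivAt (fun t => eval (i.insertNth t y : Fin (m + 1) → ℝ) p)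
      (eval (i.insertNth t y : Fin (m + 1) → ℝ) (pderiv i p)) t := by
  induction p using MvPolynomial.induction_on with
  | C a => simpa using hasDerivAt_const t a
  | add p q hp hq =>
    simp only [map_add]
    exact hp.add hq
  | mul_X p j hp =>
    have hX : HasDerivAt (fun t => (i.insertNth t y : Fin (m + 1) → ℝ) j)
        (eval (i.insertNth t y : Fin (m + 1) → ℝ) (pderiv i (X j))) t := by
      rcases Fin.eq_self_or_eq_succAbove i j with rfl | ⟨k, rfl⟩
      · simp only [Fin.insertNth_apply_same, pderiv_X_self, map_one]
        exact hasDerivAt_id t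
      · simpa [pderiv_X_of_ne (Fin.succAbove_ne i k)] using hasDerivAt_const t (y k)
    have h := hp.mul hX
    simp only [pderiv_mul, map_add, map_mul, eval_X]
    exact h

lemma evalP_rsqP {d : ℕ} (x : Fin d → ℝ) : evalP (rsqP d) x = ∑ i, x i ^ 2 := by
  simp [evalP, rsqP]

/-- Fubini along the `i`-th coordinate reduces the radial rule to `integral_chord`. -/
lemma moment_radial_aux {m : ℕ} (hd : 2 ≤ m + 1) {μ : ℝ} (hμ : -1 < μ) (i : Fin (m + 1))
    (p : MvPolynomial (Fin (m + 1)) ℝ) :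
    moment hd hμ ((1 - rsqP (m + 1)) * pderiv i p - C (2 * (μ + 1)) * (X i * p)) = 0 := by
  set q := (1 - rsqP (m + 1)) * pderiv i p - C (2 * (μ + 1)) * (X i * p) with hq
  have hint := integrableOn_evalP_mul hd hμ q
  rw [moment_apply]
  rw [← integrable_indicator_iff (isClosed_Bd _).measurableSet] at hint
  rw [← integral_indicator (isClosed_Bd _).measurableSet]
  set G := (Bd (m + 1)).indicator (fun x => evalP q x * Wmu (m + 1) μ x) with hG
  have hmp := (volume_preserving_piFinSuccAbove (fun _ : Fin (m + 1) => ℝ) i).symm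
  rw [← hmp.integral_comp (MeasurableEquiv.measurableEmbedding _)]
  have hint' := (hmp.integrable_comp_emb (MeasurableEquiv.measurableEmbedding _)).2 hint
  rw [Measure.volume_eq_prod] at hint' ⊢
  refine (integral_prod_symm _ hint').trans ?_
  apply integral_eq_zero_of_ae
  refine Filter.Eventually.of_forall fun y => ?_
  have h := integral_chord (fun t => hasDerivAt_eval_insertNth i y p t) hμ (∑ j, y j ^ 2)
  simp only [Pi.zero_apply, Function.comp_apply]
  rw [← h]
  congr 1
  ext t
  have hsum : ∑ j, (i.insertNth t y : Fin (m + 1) → ℝ) j ^ 2 = t ^ 2 + ∑ j, y j ^ 2 := by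
    rw [Fin.sum_univ_succAbove _ i]; simp
  have hco : (MeasurableEquiv.piFinSuccAbove (fun _ => ℝ) i).symm (t, y)
      = (i.insertNth t y : Fin (m + 1) → ℝ) := rfl
  rw [hco, hG]
  have hmem : (i.insertNth t y : Fin (m + 1) → ℝ) ∈ Bd (m + 1)
      ↔ t ∈ {t : ℝ | t ^ 2 + ∑ j, y j ^ 2 ≤ 1} := by
    rw [mem_Bd_iff, hsum]; rfl
  by_cases hb : t ∈ {t : ℝ | t ^ 2 + ∑ j, y j ^ 2 ≤ 1}
  · rw [Set.indicator_of_mem (hmem.2 hb), Set.indicator_of_mem hb, Wmu, eunorm_sq, hsum]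
    congr 1
    have hr := evalP_rsqP (i.insertNth t y : Fin (m + 1) → ℝ)
    rw [hsum] at hr
    unfold evalP at hr ⊢
    rw [hq]
    simp only [map_sub, map_mul, hr, eval_C, eval_X, map_one, Fin.insertNth_apply_same]
  · rw [Set.indicator_of_notMem (fun h => hb (hmem.1 h)), Set.indicator_of_notMem hb]

lemma moment_radial {d : ℕ} (hd : 2 ≤ d) {μ : ℝ} (hμ : -1 < μ) (i : Fin d)
    (p : MvPolynomial (Fin d) ℝ) :
    moment hd hμ ((1 - rsqP d) * pderiv i p) = 2 * (μ + 1) * moment hd hμ (X i * p) := by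
  obtain ⟨m, rfl⟩ : ∃ m, d = m + 1 := ⟨d - 1, by omega⟩
  have h := moment_radial_aux hd hμ i p
  rw [map_sub, map_C_mul_functional] at h
  linarith

lemma Dpoly_rsqP_pow_mul {d : ℕ} (i j : Fin d) (k : ℕ) (p : MvPolynomial (Fin d) ℝ) :
    Dpoly i j (rsqP d ^ k * p) = rsqP d ^ k * Dpoly i j p := by
  have hr : ∀ i, pderiv i (rsqP d) = 2 * X i := by
    intro i
    simp [rsqP, pderiv_X, Pi.single_apply]
  have h0 : Dpoly i j (rsqP d ^ k) = 0 := by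
    simp only [Dpoly, pderiv_pow, hr]; ring
  rw [Dpoly_mul, h0]; ring

/-- Antisymmetrizing the radial rule gives `L((1 - r²) D_{ij} p) = 0`. Since `D_{ij}` commutes
with multiplication by `r²`, `L(r^{2k} D_{ij} p)` does not depend on `k`; it tends to `0` by
dominated convergence. -/
lemma moment_angular {d : ℕ} (hd : 2 ≤ d) {μ : ℝ} (hμ : -1 < μ) (i j : Fin d)
    (p : MvPolynomial (Fin d) ℝ) : moment hd hμ (Dpoly i j p) = 0 := by
  have h1 : ∀ q, moment hd hμ ((1 - rsqP d) * Dpoly i j q) = 0 := by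
    intro q
    have hj := moment_radial hd hμ j (X i * q)
    have hi := moment_radial hd hμ i (X j * q)
    have e : (1 - rsqP d) * Dpoly i j q
        = (1 - rsqP d) * pderiv j (X i * q) - (1 - rsqP d) * pderiv i (X j * q) := by
      have hs : pderiv j (X i : MvPolynomial (Fin d) ℝ) = pderiv i (X j) := by
        simp [pderiv_X, Pi.single_apply, eq_comm]
      rw [pderiv_mul, pderiv_mul, hs, Dpoly]; ring
    rw [e, map_sub, hi, hj, mul_left_comm (X j)]
    ring
  have h2 : ∀ k : ℕ, moment hd hμ (rsqP d ^ k * Dpoly i j p) = moment hd hμ (Dpoly i j p) := by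
    intro k
    induction k with
    | zero => simp
    | succ k ih =>
      have h := h1 (rsqP d ^ k * p)
      rw [Dpoly_rsqP_pow_mul, sub_mul, one_mul, map_sub, ih, ← mul_assoc, ← pow_succ'] at h
      linarith
  have hlim : Filter.Tendsto (fun k : ℕ => moment hd hμ (rsqP d ^ k * Dpoly i j p))
      Filter.atTop (nhds (∫ _ in Bd d, (0 : ℝ))) := by
    simp only [moment_apply]
    have hi := integrableOn_evalP_mul hd hμ (Dpoly i j p)
    refine tendsto_integral_of_dominated_convergence
      (fun x => ‖evalP (Dpoly i j p) x * Wmu d μ x‖)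
      (fun k => (integrableOn_evalP_mul hd hμ _).aestronglyMeasurable) hi.norm ?_ ?_
    · intro k
      filter_upwards [ae_restrict_mem (isClosed_Bd d).measurableSet] with x hx
      have hr := evalP_rsqP x
      unfold evalP at hr ⊢
      rw [map_mul, map_pow, hr, mul_assoc, norm_mul]
      apply mul_le_of_le_one_left (norm_nonneg _)
      rw [norm_pow]
      apply pow_le_one₀ (norm_nonneg _)
      rw [Real.norm_of_nonneg (Finset.sum_nonneg fun _ _ => sq_nonneg _)]
      exact mem_Bd_iff.1 hx
    · filter_upwards [ae_eunorm_lt hd] with x hx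
      have hr := evalP_rsqP x
      rw [← eunorm_sq] at hr
      unfold evalP at hr ⊢
      simp only [map_mul, map_pow, hr]
      have h0 : 0 ≤ eunorm x := Real.sqrt_nonneg _
      have hlt : eunorm x ^ 2 < 1 := pow_lt_one₀ h0 hx two_ne_zero
      have := (tendsto_pow_atTop_nhds_zero_of_lt_one (sq_nonneg _) hlt).mul_const
        (eval x (Dpoly i j p) * Wmu d μ x)
      simpa [mul_assoc] using this
  simp only [h2, integral_zero] at hlim
  exact tendsto_nhds_unique tendsto_const_nhds hlim

/-! ### Positivity -/

lemma one_sub_eunorm_sq_nonneg {d : ℕ} {x : Fin d → ℝ} (hx : x ∈ Bd d) :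
    0 ≤ 1 - eunorm x ^ 2 := by
  have := mem_Bd_iff.1 hx
  rw [eunorm_sq]; linarith

lemma mul_self_mul_Wmu_nonneg {d : ℕ} (μ : ℝ) (p : MvPolynomial (Fin d) ℝ) {x : Fin d → ℝ}
    (hx : x ∈ Bd d) : 0 ≤ evalP (p * p) x * Wmu d μ x := by
  apply mul_nonneg
  · simp only [evalP, map_mul]; exact mul_self_nonneg _
  · exact Real.rpow_nonneg (one_sub_eunorm_sq_nonneg hx) _

lemma moment_definite {d : ℕ} (hd : 2 ≤ d) {μ : ℝ} (hμ : -1 < μ) (p : MvPolynomial (Fin d) ℝ)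
    (h : moment hd hμ (p * p) = 0) : p = 0 := by
  have hae : ∀ᵐ x ∂(volume.restrict (Bd d)), evalP p x = 0 := by
    rw [moment_apply, integral_eq_zero_iff_of_nonneg_ae _ (integrableOn_evalP_mul hd hμ _)] at h
    · filter_upwards [h, ae_eunorm_lt hd] with x hx hlt
      have hW : 0 < Wmu d μ x := by
        apply Real.rpow_pos_of_pos
        have := pow_lt_one₀ (show 0 ≤ eunorm x from Real.sqrt_nonneg _) hlt two_ne_zero
        linarith
      have hz : evalP (p * p) x = 0 := (mul_eq_zero.1 hx).resolve_right hW.ne'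
      simpa [evalP] using hz
    · filter_upwards [ae_restrict_mem (isClosed_Bd d).measurableSet] with x hx
      exact mul_self_mul_Wmu_nonneg μ p hx
  have hd0 : (0 : ℝ) < d := by positivity
  -- The cube `(0, 1/d)^d` lies inside the ball, and a polynomial vanishing on it is zero.
  let U : Set (Fin d → ℝ) := Set.pi Set.univ fun _ => Set.Ioo (0 : ℝ) (1 / d)
  have hU : IsOpen U := isOpen_set_pi Set.finite_univ fun _ _ => isOpen_Ioo
  have hUB : U ⊆ Bd d := by
    intro x hx
    rw [mem_Bd_iff]
    calc ∑ i, x i ^ 2 ≤ ∑ _i : Fin d, (1 / d : ℝ) := by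
          refine Finset.sum_le_sum fun i _ => ?_
          obtain ⟨h0, h1⟩ := hx i (Set.mem_univ i)
          have : (1 / d : ℝ) ≤ 1 := by
            rw [div_le_one hd0]; exact_mod_cast (by omega : 1 ≤ d)
          nlinarith
      _ = 1 := by simp [hd0.ne']
  have hz : Set.EqOn (evalP p) (fun _ => 0) U :=
    Measure.eqOn_open_of_ae_eq (ae_restrict_of_ae_restrict_of_subset hUB hae) hU
      (continuous_evalP p).continuousOn continuousOn_const
  apply MvPolynomial.funext_set (fun _ : Fin d => Set.Ioo (0 : ℝ) (1 / d))
    (fun _ => Set.Ioo_infinite (by positivity))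
  intro x hx
  rw [map_zero]
  exact hz hx

lemma isBallFunctional_moment {d : ℕ} (hd : 2 ≤ d) {μ : ℝ} (hμ : -1 < μ) :
    IsBallFunctional d μ (moment hd hμ) where
  radial := moment_radial hd hμ
  angular := moment_angular hd hμ
  nonneg p := setIntegral_nonneg (isClosed_Bd d).measurableSet
    fun _ hx => mul_self_mul_Wmu_nonneg μ p hx
  definite := moment_definite hd hμ

lemma sqNormMu_evalP {d : ℕ} (hd : 2 ≤ d) {μ : ℝ} (hμ : -1 < μ) (p : MvPolynomial (Fin d) ℝ) :
    sqNormMu d μ (evalP p) = moment hd hμ (p * p) := by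
  simp [sqNormMu, moment_apply, evalP, sq]

lemma sqNormMu_sqrt_mul {d : ℕ} (hd : 2 ≤ d) {μ : ℝ} (hμ : -1 < μ)
    (p : MvPolynomial (Fin d) ℝ) :
    sqNormMu d μ (fun x => Real.sqrt (1 - eunorm x ^ 2) * evalP p x)
      = moment hd hμ ((1 - rsqP d) * (p * p)) := by
  rw [sqNormMu, moment_apply]
  refine setIntegral_congr_fun (isClosed_Bd d).measurableSet fun x hx => ?_
  have hr := evalP_rsqP x
  rw [← eunorm_sq] at hr
  unfold evalP at hr ⊢
  simp only [map_mul, map_sub, map_one, hr, mul_pow,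
    Real.sq_sqrt (one_sub_eunorm_sq_nonneg hx)]
  ring

/-- the sharp `L²(W_μ,B^d)` Bernstein inequality
`Σ_i ‖√(1−‖x‖²) ∂_i f‖²_{μ,2} + Σ_{i<j} ‖D_{i,j} f‖²_{μ,2} ≤ n(n+2μ+d)‖f‖²_{μ,2}`,
with equality iff `f ∈ 𝒱_n(W_μ,B^d)`. -/
theorem stmt2 (d : ℕ) (hd : 2 ≤ d) (μ : ℝ) (hμ : -1 < μ) (n : ℕ)
    (f : MvPolynomial (Fin d) ℝ) (hf : f.totalDegree ≤ n) :
    ((∑ i, sqNormMu d μ (fun x => Real.sqrt (1 - eunorm x ^ 2) * evalP (pderiv i f) x))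
        + ∑ i, ∑ j ∈ Finset.Ioi i, sqNormMu d μ (evalP (Dpoly i j f))
      ≤ (n : ℝ) * ((n : ℝ) + 2 * μ + d) * sqNormMu d μ (evalP f))
    ∧ (((∑ i, sqNormMu d μ (fun x => Real.sqrt (1 - eunorm x ^ 2) * evalP (pderiv i f) x))
        + ∑ i, ∑ j ∈ Finset.Ioi i, sqNormMu d μ (evalP (Dpoly i j f))
      = (n : ℝ) * ((n : ℝ) + 2 * μ + d) * sqNormMu d μ (evalP f)) ↔ memV d μ n f) := by
  have hL := isBallFunctional_moment hd hμ
  obtain ⟨h1, h2⟩ := hL.bernstein hd hμ n f hf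
  rw [← hL.energy] at h1 h2
  simp only [sqNormMu_sqrt_mul hd hμ, sqNormMu_evalP hd hμ]
  refine ⟨h1, h2.trans ⟨fun h => ⟨hf, fun g hg => ?_⟩, fun h g hg => ?_⟩⟩
  · simpa [moment_apply, evalP] using h g hg
  · simpa [moment_apply, evalP] using h.2 g hg

end
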